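/- Let a ~ N(0, I_n) be a standard Gaussian vector in ℝ^n, let s ∈ ℝ^n be nonzero, let η ∈ ℝ, and let α₁, α₂ ∈ ℝ satisfy 1 + η/‖s‖₂ < α₁ < α₂. Set y = |⟨a, s⟩| + η and φ₁(t) = 1{α₁ − η/‖s‖₂ < |t| < α₂ − η/‖s‖₂}. Then E[ y · a aᵀ · 1{α₁‖s‖₂ < y < α₂‖s‖₂} ] = ‖s‖₂ (γ₁ I_n + β₁ s̄ s̄ᵀ) + η (γ̌₁ I_n + β̌₁ s̄ s̄ᵀ), where, for g ~ N(0,1): γ₁ = E[|g| φ₁(g)], β₁ = E[|g|³ φ₁(g)] − γ₁, γ̌₁ = E[φ₁(g)], and β̌₁ = E[g² φ₁(g)] − γ̌₁. -/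

import Mathlib

open MeasureTheory ProbabilityTheory Matrix

/-- The squared-sum Euclidean (ℓ₂) norm of a vector in `Fin d → ℝ`. -/
noncomputable def l2norm {d : ℕ} (v : Fin d → ℝ) : ℝ := Real.sqrt (∑ i, (v i) ^ 2)

/-- The standard Gaussian measure `N(0, I_n)` on `ℝ^n`. -/
noncomputable def piGauss (n : ℕ) : Measure (Fin n → ℝ) :=
  Measure.pi fun _ : Fin n => gaussianReal 0 1

/-- Expectation of `f(g)` for `g ~ N(0,1)`. -/
noncomputable def gExp (f : ℝ → ℝ) : ℝ := ∫ g, f g ∂(gaussianReal 0 1)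

/-- The indicator `φ₁(t) = 1{b₁ < |t| < b₂}`. -/
noncomputable def phiInd (b₁ b₂ t : ℝ) : ℝ := if b₁ < |t| ∧ |t| < b₂ then 1 else 0

/-!
Split each coordinate of `a` into its regression on `Z = ⟨a, s̄⟩` and a residual. The residuals are
jointly Gaussian and uncorrelated with `Z`, hence independent of it, so conditionally on `Z` the
second moment of `a` is `I - s̄ s̄ᵀ + Z² s̄ s̄ᵀ`. The weight `y 1{α₁‖s‖₂ < y < α₂‖s‖₂}` is the
function `(‖s‖₂|Z| + η) φ₁(Z)` of `Z` alone, and `Z ~ N(0, 1)`.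
-/

open WithLp
open scoped InnerProductSpace

section Regression

variable {Ω : Type*} {mΩ : MeasurableSpace Ω} {P : Measure Ω} {X Y Z U V : Ω → ℝ} {F : ℝ → ℝ}

lemma integrable_mul_of_integrable_of_integrable_mul_sq {f g : Ω → ℝ}
    (hg : AEStronglyMeasurable g P) (hf : Integrable f P)
    (hfg : Integrable (fun ω ↦ f ω * g ω ^ 2) P) : Integrable (fun ω ↦ f ω * g ω) P := by
  refine (hf.norm.add hfg.norm).mono' (hf.aestronglyMeasurable.mul hg) (ae_of_all _ fun ω ↦ ?_)
  have abs_le_one_add_sq : |g ω| ≤ 1 + g ω ^ 2 := by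
    nlinarith [sq_abs (g ω), sq_nonneg (|g ω| - 1)]
  calc ‖f ω * g ω‖ = |f ω| * |g ω| := by rw [Real.norm_eq_abs, abs_mul]
    _ ≤ |f ω| * (1 + g ω ^ 2) := by gcongr
    _ = ‖f ω‖ + ‖f ω * g ω ^ 2‖ := by
      rw [Real.norm_eq_abs, Real.norm_eq_abs, abs_mul, abs_of_nonneg (sq_nonneg (g ω))]; ring

lemma integral_comp_mul_mul_of_indepFun (hind : IndepFun Z (fun ω ↦ (U ω, V ω)) P)
    (hZ : AEMeasurable Z P) (hU : Integrable U P) (hV : Integrable V P)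
    (hUV : Integrable (fun ω ↦ U ω * V ω) P) (hU0 : P[U] = 0) (hV0 : P[V] = 0)
    (hFm : Measurable F) (hF : Integrable (fun ω ↦ F (Z ω)) P)
    (hF2 : Integrable (fun ω ↦ F (Z ω) * Z ω ^ 2) P) (p q : ℝ) :
    ∫ ω, F (Z ω) * ((p * Z ω + U ω) * (q * Z ω + V ω)) ∂P =
      p * q * ∫ ω, F (Z ω) * Z ω ^ 2 ∂P + (∫ ω, F (Z ω) ∂P) * ∫ ω, U ω * V ω ∂P := by
  have hF1 : Integrable (fun ω ↦ F (Z ω) * Z ω) P :=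
    integrable_mul_of_integrable_of_integrable_mul_sq hZ.aestronglyMeasurable hF hF2
  have cross {W : Ω → ℝ} (hZW : IndepFun Z W P) (hW : Integrable W P) (hW0 : P[W] = 0) :
      Integrable (fun ω ↦ F (Z ω) * Z ω * W ω) P ∧ ∫ ω, F (Z ω) * Z ω * W ω ∂P = 0 := by
    have indep : IndepFun (fun ω ↦ F (Z ω) * Z ω) W P :=
      hZW.comp (φ := fun t ↦ F t * t) (hFm.mul measurable_id) measurable_id
    refine ⟨indep.integrable_mul hF1 hW, ?_⟩
    rw [indep.integral_fun_mul_eq_mul_integral hF1.aestronglyMeasurable hW.aestronglyMeasurable,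
      hW0, mul_zero]
  obtain ⟨integrable_U, integral_U⟩ :=
    cross (W := U) (hind.comp measurable_id measurable_fst) hU hU0
  obtain ⟨integrable_V, integral_V⟩ :=
    cross (W := V) (hind.comp measurable_id measurable_snd) hV hV0
  have indep_UV : IndepFun (fun ω ↦ F (Z ω)) (fun ω ↦ U ω * V ω) P :=
    hind.comp hFm measurable_mul
  have integrable_UV : Integrable (fun ω ↦ F (Z ω) * (U ω * V ω)) P :=
    indep_UV.integrable_mul hF hUV
  calc ∫ ω, F (Z ω) * ((p * Z ω + U ω) * (q * Z ω + V ω)) ∂P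
    _ = ∫ ω, p * q * (F (Z ω) * Z ω ^ 2) + F (Z ω) * (U ω * V ω) +
          q * (F (Z ω) * Z ω * U ω) + p * (F (Z ω) * Z ω * V ω) ∂P := by
      congr with ω; ring
    _ = p * q * ∫ ω, F (Z ω) * Z ω ^ 2 ∂P + ∫ ω, F (Z ω) * (U ω * V ω) ∂P := by
      rw [integral_add (by fun_prop) (by fun_prop), integral_add (by fun_prop) (by fun_prop),
        integral_add (by fun_prop) (by fun_prop)]
      simp only [integral_const_mul, integral_U, integral_V, mul_zero, add_zero]
    _ = p * q * ∫ ω, F (Z ω) * Z ω ^ 2 ∂P + (∫ ω, F (Z ω) ∂P) * ∫ ω, U ω * V ω ∂P := by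
      rw [indep_UV.integral_fun_mul_eq_mul_integral hF.aestronglyMeasurable
        hUV.aestronglyMeasurable]

/-- The residual of the linear regression of `X` on `Z`, without intercept: it is meant for centred
`X` and `Z`. If `Z` has variance zero, it is `X`. -/
noncomputable def regressionResidual (X Z : Ω → ℝ) (P : Measure Ω) (ω : Ω) : ℝ :=
  X ω - cov[X, Z; P] / Var[Z; P] * Z ω

lemma memLp_regressionResidual (hX : MemLp X 2 P) (hZ : MemLp Z 2 P) :
    MemLp (regressionResidual X Z P) 2 P :=
  hX.sub (hZ.const_mul _)

lemma integral_regressionResidual (hX : Integrable X P) (hZ : Integrable Z P) (hX0 : P[X] = 0)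
    (hZ0 : P[Z] = 0) : P[regressionResidual X Z P] = 0 := by
  simp only [regressionResidual]
  rw [integral_sub hX (hZ.const_mul _), integral_const_mul, hX0, hZ0, mul_zero, sub_zero]

lemma covariance_regressionResidual_self [IsFiniteMeasure P] (hX : MemLp X 2 P)
    (hZ : MemLp Z 2 P) (hv : Var[Z; P] ≠ 0) : cov[Z, regressionResidual X Z P; P] = 0 := by
  have expand : cov[Z, regressionResidual X Z P; P] =
      cov[Z, X; P] - cov[X, Z; P] / Var[Z; P] * cov[Z, Z; P] := by
    rw [← covariance_const_mul_right]
    exact covariance_fun_sub_right hZ hX (hZ.const_mul _)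
  rw [expand, covariance_self hZ.aemeasurable, div_mul_cancel₀ _ hv, covariance_comm Z, sub_self]

lemma covariance_regressionResidual [IsFiniteMeasure P] (hX : MemLp X 2 P) (hY : MemLp Y 2 P)
    (hZ : MemLp Z 2 P) (hv : Var[Z; P] ≠ 0) :
    cov[regressionResidual X Z P, regressionResidual Y Z P; P] =
      cov[X, Y; P] - cov[X, Z; P] * cov[Y, Z; P] / Var[Z; P] := by
  have drop_left : cov[regressionResidual X Z P, regressionResidual Y Z P; P] =
      cov[X, regressionResidual Y Z P; P] -
        cov[X, Z; P] / Var[Z; P] * cov[Z, regressionResidual Y Z P; P] := by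
    rw [← covariance_const_mul_left]
    exact covariance_fun_sub_left hX (hZ.const_mul _) (memLp_regressionResidual hY hZ)
  have expand_right : cov[X, regressionResidual Y Z P; P] =
      cov[X, Y; P] - cov[Y, Z; P] / Var[Z; P] * cov[X, Z; P] := by
    rw [← covariance_const_mul_right]
    exact covariance_fun_sub_right hX hY (hZ.const_mul _)
  rw [drop_left, covariance_regressionResidual_self hY hZ hv, expand_right]
  ring

lemma indepFun_regressionResidual (hG : HasGaussianLaw (fun ω ↦ (Z ω, X ω, Y ω)) P)
    (hv : Var[Z; P] ≠ 0) :
    IndepFun Z (fun ω ↦ (regressionResidual X Z P ω, regressionResidual Y Z P ω)) P := by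
  have := hG.isProbabilityMeasure
  have hZ := hG.fst.memLp_two
  have hX := hG.snd.fst.memLp_two
  have hY := hG.snd.snd.memLp_two
  let residualMap (W : Ω → ℝ) (L : ℝ × ℝ × ℝ →L[ℝ] ℝ) : ℝ × ℝ × ℝ →L[ℝ] ℝ :=
    L - (cov[W, Z; P] / Var[Z; P]) • .fst ℝ ℝ (ℝ × ℝ)
  have residual_gaussian : HasGaussianLaw
      (fun ω ↦ (Z ω, regressionResidual X Z P ω, regressionResidual Y Z P ω)) P :=
    hG.map_fun ((ContinuousLinearMap.fst ℝ ℝ (ℝ × ℝ)).prod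
      ((residualMap X (.comp (.fst ℝ ℝ ℝ) (.snd ℝ ℝ (ℝ × ℝ)))).prod
        (residualMap Y (.comp (.snd ℝ ℝ ℝ) (.snd ℝ ℝ (ℝ × ℝ))))))
  refine residual_gaussian.indepFun_of_covariance_strongDual fun L₁ L₂ ↦ ?_
  have L₁_apply : L₁ ∘ Z = fun ω ↦ L₁ 1 * Z ω := by
    ext ω
    simpa [mul_comm] using L₁.map_smul (Z ω) 1
  have L₂_apply : (L₂ ∘ fun ω ↦ (regressionResidual X Z P ω, regressionResidual Y Z P ω)) =
      fun ω ↦ L₂ (1, 0) * regressionResidual X Z P ω + L₂ (0, 1) * regressionResidual Y Z P ω := by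
    ext ω
    rw [mul_comm (L₂ _), mul_comm (L₂ _), ← smul_eq_mul, ← smul_eq_mul, ← map_smul, ← map_smul,
      ← map_add]
    simp
  have decorrelated := covariance_add_right hZ
    ((memLp_regressionResidual hX hZ).const_mul (L₂ (1, 0)))
    ((memLp_regressionResidual hY hZ).const_mul (L₂ (0, 1)))
  rw [covariance_const_mul_right, covariance_const_mul_right,
    covariance_regressionResidual_self hX hZ hv, covariance_regressionResidual_self hY hZ hv,
    mul_zero, mul_zero, add_zero] at decorrelated
  rw [L₁_apply, L₂_apply, covariance_const_mul_left]
  exact mul_eq_zero_of_right _ decorrelated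

lemma integral_comp_mul_mul_of_hasGaussianLaw
    (hG : HasGaussianLaw (fun ω ↦ (Z ω, X ω, Y ω)) P) (hv : Var[Z; P] ≠ 0)
    (hX0 : P[X] = 0) (hY0 : P[Y] = 0) (hZ0 : P[Z] = 0)
    (hFm : Measurable F) (hF : Integrable (fun ω ↦ F (Z ω)) P)
    (hF2 : Integrable (fun ω ↦ F (Z ω) * Z ω ^ 2) P) :
    ∫ ω, F (Z ω) * (X ω * Y ω) ∂P =
      cov[X, Z; P] / Var[Z; P] * (cov[Y, Z; P] / Var[Z; P]) * ∫ ω, F (Z ω) * Z ω ^ 2 ∂P +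
        (∫ ω, F (Z ω) ∂P) * (cov[X, Y; P] - cov[X, Z; P] * cov[Y, Z; P] / Var[Z; P]) := by
  have := hG.isProbabilityMeasure
  have hZ := hG.fst.memLp_two
  have hX := hG.snd.fst.memLp_two
  have hY := hG.snd.snd.memLp_two
  have hU := memLp_regressionResidual hX hZ
  have hV := memLp_regressionResidual hY hZ
  have hU0 := integral_regressionResidual hG.snd.fst.integrable hG.fst.integrable hX0 hZ0
  have hV0 := integral_regressionResidual hG.snd.snd.integrable hG.fst.integrable hY0 hZ0
  have residual_moment :
      ∫ ω, regressionResidual X Z P ω * regressionResidual Y Z P ω ∂P =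
        cov[X, Y; P] - cov[X, Z; P] * cov[Y, Z; P] / Var[Z; P] := by
    rw [← covariance_regressionResidual hX hY hZ hv, covariance_eq_sub hU hV, hU0, zero_mul,
      sub_zero]
    rfl
  have decompose := integral_comp_mul_mul_of_indepFun (indepFun_regressionResidual hG hv)
    hZ.aemeasurable (hU.integrable one_le_two) (hV.integrable one_le_two) (hU.integrable_mul hV)
    hU0 hV0 hFm hF hF2 (cov[X, Z; P] / Var[Z; P]) (cov[Y, Z; P] / Var[Z; P])
  rw [← residual_moment, ← decompose]
  simp only [regressionResidual, add_sub_cancel]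

end Regression

section StdGaussian

variable {E : Type*} [NormedAddCommGroup E] [InnerProductSpace ℝ E] [FiniteDimensional ℝ E]
  [MeasurableSpace E] [BorelSpace E]

lemma integral_inner_stdGaussian (v : E) : ∫ x, ⟪v, x⟫_ℝ ∂(stdGaussian E) = 0 :=
  integral_strongDual_stdGaussian (innerSL ℝ v)

lemma covariance_inner_stdGaussian (v w : E) :
    cov[fun x ↦ ⟪v, x⟫_ℝ, fun x ↦ ⟪w, x⟫_ℝ; stdGaussian E] = ⟪v, w⟫_ℝ := by
  rw [← covarianceBilin_apply_eq_cov IsGaussian.memLp_two_id, covarianceBilin_stdGaussian]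
  rfl

lemma variance_inner_stdGaussian (v : E) : Var[fun x ↦ ⟪v, x⟫_ℝ; stdGaussian E] = ‖v‖ ^ 2 := by
  rw [← covariance_self (by fun_prop), covariance_inner_stdGaussian, real_inner_self_eq_norm_sq]

lemma map_inner_stdGaussian (v : E) :
    (stdGaussian E).map (fun x ↦ ⟪v, x⟫_ℝ) = gaussianReal 0 (‖v‖₊ ^ 2) := by
  have gaussian : HasGaussianLaw (fun x ↦ ⟪v, x⟫_ℝ) (stdGaussian E) :=
    IsGaussian.hasGaussianLaw_id.map_fun (innerSL ℝ v)
  rw [gaussian.map_eq_gaussianReal, integral_inner_stdGaussian, variance_inner_stdGaussian,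
    Real.toNNReal_pow (norm_nonneg v), norm_toNNReal]

lemma integral_comp_inner_mul_inner_mul_inner_stdGaussian {u : E} (hu : ‖u‖ = 1) {F : ℝ → ℝ}
    (hFm : Measurable F) (hF : Integrable F (gaussianReal 0 1))
    (hF2 : Integrable (fun g ↦ g ^ 2 * F g) (gaussianReal 0 1)) (v w : E) :
    ∫ x, F ⟪u, x⟫_ℝ * (⟪v, x⟫_ℝ * ⟪w, x⟫_ℝ) ∂(stdGaussian E) =
      gExp F * ⟪v, w⟫_ℝ + (gExp (fun g ↦ g ^ 2 * F g) - gExp F) * (⟪v, u⟫_ℝ * ⟪w, u⟫_ℝ) := by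
  have law : MeasurePreserving (fun x ↦ ⟪u, x⟫_ℝ) (stdGaussian E) (gaussianReal 0 1) :=
    ⟨by fun_prop, by rw [map_inner_stdGaussian, show ‖u‖₊ = 1 from NNReal.eq hu, one_pow]⟩
  have gExp_eq {G : ℝ → ℝ} (hG : Measurable G) : ∫ x, G ⟪u, x⟫_ℝ ∂(stdGaussian E) = gExp G := by
    rw [gExp, ← law.map_eq, integral_map law.aemeasurable hG.aestronglyMeasurable]
  have gaussian : HasGaussianLaw (fun x ↦ (⟪u, x⟫_ℝ, ⟪v, x⟫_ℝ, ⟪w, x⟫_ℝ)) (stdGaussian E) :=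
    IsGaussian.hasGaussianLaw_id.map_fun ((innerSL ℝ u).prod ((innerSL ℝ v).prod (innerSL ℝ w)))
  have hvar : Var[fun x ↦ ⟪u, x⟫_ℝ; stdGaussian E] = 1 := by
    rw [variance_inner_stdGaussian, hu, one_pow]
  simp only [mul_comm (_ ^ 2)] at hF2 ⊢
  rw [integral_comp_mul_mul_of_hasGaussianLaw gaussian (hvar.trans_ne one_ne_zero)
      (integral_inner_stdGaussian v) (integral_inner_stdGaussian w) (integral_inner_stdGaussian u)
      hFm (law.integrable_comp_of_integrable hF) (law.integrable_comp_of_integrable hF2),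
    gExp_eq hFm, gExp_eq (G := fun g ↦ F g * g ^ 2) (by fun_prop), hvar]
  simp only [covariance_inner_stdGaussian]
  ring

end StdGaussian

section Coordinates

variable {n : ℕ}

lemma integral_piGauss_eq_integral_stdGaussian (f : EuclideanSpace ℝ (Fin n) → ℝ) :
    ∫ a, f (toLp 2 a) ∂(piGauss n) = ∫ x, f x ∂(stdGaussian (EuclideanSpace ℝ (Fin n))) := by
  rw [← map_pi_eq_stdGaussian]
  exact (integral_map_equiv (MeasurableEquiv.toLp 2 (Fin n → ℝ)) f).symm

lemma l2norm_eq_norm_toLp (v : Fin n → ℝ) : l2norm v = ‖toLp 2 v‖ := by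
  simp [l2norm, EuclideanSpace.norm_eq]

lemma l2norm_pos {v : Fin n → ℝ} (hv : v ≠ 0) : 0 < l2norm v := by
  rw [l2norm_eq_norm_toLp, norm_pos_iff]
  exact (toLp_eq_zero 2).not.mpr hv

lemma l2norm_smul (c : ℝ) (v : Fin n → ℝ) : l2norm (c • v) = |c| * l2norm v := by
  rw [l2norm_eq_norm_toLp, l2norm_eq_norm_toLp, toLp_smul, norm_smul, Real.norm_eq_abs]

lemma integral_comp_dotProduct_mul_mul_piGauss {u : Fin n → ℝ} (hu : l2norm u = 1) {F : ℝ → ℝ}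
    (hFm : Measurable F) (hF : Integrable F (gaussianReal 0 1))
    (hF2 : Integrable (fun g ↦ g ^ 2 * F g) (gaussianReal 0 1)) (i j : Fin n) :
    ∫ a, F (a ⬝ᵥ u) * (a i * a j) ∂(piGauss n) =
      gExp F * (if i = j then 1 else 0) +
        (gExp (fun g ↦ g ^ 2 * F g) - gExp F) * (u i * u j) := by
  have euclidean := integral_comp_inner_mul_inner_mul_inner_stdGaussian
    (hu ▸ (l2norm_eq_norm_toLp u).symm) hFm hF hF2 (EuclideanSpace.single i 1)
    (EuclideanSpace.single j 1)
  rw [← integral_piGauss_eq_integral_stdGaussian] at euclidean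
  simpa [EuclideanSpace.inner_single_left, EuclideanSpace.inner_eq_star_dotProduct,
    Pi.single_apply] using euclidean

end Coordinates

section Truncation

lemma measurable_phiInd (b c : ℝ) : Measurable (phiInd b c) :=
  .ite ((measurableSet_lt measurable_const measurable_norm).inter
    (measurableSet_lt measurable_norm measurable_const)) measurable_const measurable_const

lemma abs_abs_pow_mul_phiInd_le (b c : ℝ) (k : ℕ) (t : ℝ) :
    |(|t| ^ k * phiInd b c t)| ≤ |c| ^ k := by
  unfold phiInd
  split_ifs with h
  · rw [mul_one, abs_pow, abs_abs]
    exact pow_le_pow_left₀ (abs_nonneg t) (h.2.le.trans (le_abs_self c)) k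
  · simp

lemma integrable_abs_pow_mul_phiInd (b c : ℝ) (k : ℕ) (μ : Measure ℝ) [IsFiniteMeasure μ] :
    Integrable (fun t ↦ |t| ^ k * phiInd b c t) μ :=
  .of_bound ((measurable_norm.pow_const k).mul (measurable_phiInd b c)).aestronglyMeasurable
    (|c| ^ k) (ae_of_all _ (abs_abs_pow_mul_phiInd_le b c k))

/-- The truncated response `y · 1{α₁‖s‖₂ < y < α₂‖s‖₂}` as a function of `t = ⟨a, s̄⟩`: here `L` is
`‖s‖₂` and `b`, `c` are the endpoints `α₁ - η/‖s‖₂`, `α₂ - η/‖s‖₂` of the window for `|t|`. -/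
noncomputable def truncatedResponse (L η b c t : ℝ) : ℝ := (L * |t| + η) * phiInd b c t

lemma measurable_truncatedResponse (L η b c : ℝ) : Measurable (truncatedResponse L η b c) :=
  ((measurable_norm.const_mul L).add_const η).mul (measurable_phiInd b c)

lemma abs_pow_mul_truncatedResponse (L η b c t : ℝ) (k : ℕ) :
    |t| ^ k * truncatedResponse L η b c t =
      L * (|t| ^ (k + 1) * phiInd b c t) + η * (|t| ^ k * phiInd b c t) := by
  rw [truncatedResponse]
  ring

lemma integrable_abs_pow_mul_truncatedResponse (L η b c : ℝ) (k : ℕ) (μ : Measure ℝ)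
    [IsFiniteMeasure μ] : Integrable (fun t ↦ |t| ^ k * truncatedResponse L η b c t) μ := by
  simp only [abs_pow_mul_truncatedResponse]
  exact ((integrable_abs_pow_mul_phiInd b c (k + 1) μ).const_mul L).add
    ((integrable_abs_pow_mul_phiInd b c k μ).const_mul η)

lemma gExp_abs_pow_mul_truncatedResponse (L η b c : ℝ) (k : ℕ) :
    gExp (fun g ↦ |g| ^ k * truncatedResponse L η b c g) =
      L * gExp (fun g ↦ |g| ^ (k + 1) * phiInd b c g) +
        η * gExp (fun g ↦ |g| ^ k * phiInd b c g) := by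
  simp only [gExp, abs_pow_mul_truncatedResponse]
  rw [integral_add ((integrable_abs_pow_mul_phiInd b c (k + 1) _).const_mul L)
    ((integrable_abs_pow_mul_phiInd b c k _).const_mul η), integral_const_mul, integral_const_mul]

lemma ite_mul_eq_truncatedResponse {L : ℝ} (hL : 0 < L) (η α₁ α₂ t r : ℝ) :
    (if α₁ * L < |L * t| + η ∧ |L * t| + η < α₂ * L then (|L * t| + η) * r else 0) =
      truncatedResponse L η (α₁ - η / L) (α₂ - η / L) t * r := by
  have lower : α₁ * L < L * |t| + η ↔ α₁ - η / L < |t| := by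
    rw [← sub_lt_iff_lt_add, ← div_lt_iff₀' hL, sub_div, mul_div_cancel_right₀ _ hL.ne']
  have upper : L * |t| + η < α₂ * L ↔ |t| < α₂ - η / L := by
    rw [← lt_sub_iff_add_lt, ← lt_div_iff₀' hL, sub_div, mul_div_cancel_right₀ _ hL.ne']
  simp only [abs_mul, abs_of_pos hL, lower, upper, truncatedResponse, phiInd]
  split_ifs <;> ring

end Truncation

theorem stmt_7_general (n : ℕ) (s : Fin n → ℝ) (hs : s ≠ 0) (η α₁ α₂ : ℝ) (i j : Fin n) :
    (∫ a : Fin n → ℝ,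
        (if α₁ * l2norm s < |a ⬝ᵥ s| + η ∧ |a ⬝ᵥ s| + η < α₂ * l2norm s
          then (|a ⬝ᵥ s| + η) * (a i * a j) else 0) ∂(piGauss n)) =
      l2norm s *
        (gExp (fun g => |g| * phiInd (α₁ - η / l2norm s) (α₂ - η / l2norm s) g) *
            (if i = j then (1 : ℝ) else 0) +
          (gExp (fun g => |g| ^ 3 * phiInd (α₁ - η / l2norm s) (α₂ - η / l2norm s) g) -
              gExp (fun g => |g| * phiInd (α₁ - η / l2norm s) (α₂ - η / l2norm s) g)) *
            ((s i / l2norm s) * (s j / l2norm s))) +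
      η *
        (gExp (phiInd (α₁ - η / l2norm s) (α₂ - η / l2norm s)) *
            (if i = j then (1 : ℝ) else 0) +
          (gExp (fun g => g ^ 2 * phiInd (α₁ - η / l2norm s) (α₂ - η / l2norm s) g) -
              gExp (phiInd (α₁ - η / l2norm s) (α₂ - η / l2norm s))) *
            ((s i / l2norm s) * (s j / l2norm s))) := by
  have hL : 0 < l2norm s := l2norm_pos hs
  set L := l2norm s
  set b := α₁ - η / L
  set c := α₂ - η / L
  set u : Fin n → ℝ := L⁻¹ • s
  have hu : l2norm u = 1 := by
    rw [l2norm_smul, abs_of_pos (inv_pos.mpr hL), inv_mul_cancel₀ hL.ne']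
  have dotProduct_s (a : Fin n → ℝ) : a ⬝ᵥ s = L * (a ⬝ᵥ u) := by
    rw [dotProduct_smul, smul_eq_mul, mul_inv_cancel_left₀ hL.ne']
  have moment₀ := gExp_abs_pow_mul_truncatedResponse L η b c 0
  have moment₂ := gExp_abs_pow_mul_truncatedResponse L η b c 2
  have integrable₀ := integrable_abs_pow_mul_truncatedResponse L η b c 0 (gaussianReal 0 1)
  have integrable₂ := integrable_abs_pow_mul_truncatedResponse L η b c 2 (gaussianReal 0 1)
  simp only [pow_zero, one_mul, zero_add, pow_one, sq_abs, Nat.reduceAdd]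
    at moment₀ moment₂ integrable₀ integrable₂
  simp only [dotProduct_s, ite_mul_eq_truncatedResponse hL]
  rw [integral_comp_dotProduct_mul_mul_piGauss hu (measurable_truncatedResponse L η b c)
    integrable₀ integrable₂, moment₀, moment₂]
  simp only [u, Pi.smul_apply, smul_eq_mul]
  ring

/-- Let `a ~ N(0, I_n)`, `s ≠ 0`, `η ∈ ℝ`, `1 + η/‖s‖₂ < α₁ < α₂`, and
`y = |⟨a,s⟩| + η`.  With `φ₁(t) = 1{α₁ − η/‖s‖₂ < |t| < α₂ − η/‖s‖₂}` and, for
`g ~ N(0,1)`, `γ₁ = E[|g|φ₁(g)]`, `β₁ = E[|g|³φ₁(g)] − γ₁`, `γ̌₁ = E[φ₁(g)]`,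
`β̌₁ = E[g²φ₁(g)] − γ̌₁`, the matrix `E[y · a aᵀ · 1{α₁‖s‖₂ < y < α₂‖s‖₂}]` equals
`‖s‖₂ (γ₁ I_n + β₁ s̄ s̄ᵀ) + η (γ̌₁ I_n + β̌₁ s̄ s̄ᵀ)` (stated entrywise). -/
theorem stmt_7 (n : ℕ) (s : Fin n → ℝ) (hs : s ≠ 0) (η α₁ α₂ : ℝ)
    (h1 : 1 + η / l2norm s < α₁) (h2 : α₁ < α₂) (i j : Fin n) :
    (∫ a : Fin n → ℝ,
        (if α₁ * l2norm s < |a ⬝ᵥ s| + η ∧ |a ⬝ᵥ s| + η < α₂ * l2norm s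
          then (|a ⬝ᵥ s| + η) * (a i * a j) else 0) ∂(piGauss n)) =
      l2norm s *
        (gExp (fun g => |g| * phiInd (α₁ - η / l2norm s) (α₂ - η / l2norm s) g) *
            (if i = j then (1 : ℝ) else 0) +
          (gExp (fun g => |g| ^ 3 * phiInd (α₁ - η / l2norm s) (α₂ - η / l2norm s) g) -
              gExp (fun g => |g| * phiInd (α₁ - η / l2norm s) (α₂ - η / l2norm s) g)) *
            ((s i / l2norm s) * (s j / l2norm s))) +
      η *
        (gExp (phiInd (α₁ - η / l2norm s) (α₂ - η / l2norm s)) *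
            (if i = j then (1 : ℝ) else 0) +
          (gExp (fun g => g ^ 2 * phiInd (α₁ - η / l2norm s) (α₂ - η / l2norm s) g) -
              gExp (phiInd (α₁ - η / l2norm s) (α₂ - η / l2norm s))) *
            ((s i / l2norm s) * (s j / l2norm s))) :=
  stmt_7_general n s hs η α₁ α₂ i j
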